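/- arXiv:2006.00673 — 4 statements merged into one kernel-verified Lean document; each statement's English description precedes it below -/
import Mathlib

section
/- Every nonempty zero-sum free finite multiset T over ZMod 5 is g-smooth for some g ∈ ZMod 5 of additive order 5. -/
/-! Since `T` has no sub-multiset of the form `{0}` or `{y, -y}`, its support contains no two
opposite elements, so it lies in `{g, 2g}` for some `g ∈ T`: the nonzero residues mod `5` form the
cycle `1, 2, 4, 3` under doubling, in which opposite elements are at distance two. Hence `T`
consists of `i ≥ 1` copies of `g` and `j` copies of `2g`. If `i + 2j ≥ 5`, some sub-multiset with
`a` copies of `g` and `b` of `2g` has `a + 2b = 5`, hence sum zero; so `i + 2j ≤ 4`. For the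
remaining pairs `(i, j)` the sub-sums are computed by a finite check. -/

open Multiset

/-- `T` has no nonempty sub-multiset summing to zero. -/
def ZeroSumFree {n : ℕ} (T : Multiset (ZMod n)) : Prop :=
  ∀ U : Multiset (ZMod n), U ≤ T → U ≠ 0 → U.sum ≠ 0

/-- `T` is nonempty, sums to zero, and no nonempty proper sub-multiset sums to zero. -/
def MinimalZeroSum {n : ℕ} (T : Multiset (ZMod n)) : Prop :=
  T ≠ 0 ∧ T.sum = 0 ∧ ∀ U : Multiset (ZMod n), U < T → U ≠ 0 → U.sum ≠ 0

/-- The set of sums of nonempty sub-multisets of `S`. -/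
def subSums (S : Multiset ℕ) : Set ℕ :=
  {x | ∃ U : Multiset ℕ, U ≤ S ∧ U ≠ 0 ∧ U.sum = x}

/-- `S` is 1-smooth: Σ(S) = [1, σ(S)]. -/
def OneSmooth (S : Multiset ℕ) : Prop :=
  subSums S = Set.Icc 1 S.sum

/-- ⌈k/n⌉ for natural numbers (n ≥ 1). -/
def nCeil (k n : ℕ) : ℕ := (k + n - 1) / n

/-- No nonempty sub-multiset `S'` of `S` has `σ(S') ≥ ⌈k/n⌉·n` and `n ∣ σ(S')`. -/
def IdempotentSumFree (k n : ℕ) (S : Multiset ℕ) : Prop :=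
  ∀ S' : Multiset ℕ, S' ≤ S → S' ≠ 0 → ¬(nCeil k n * n ≤ S'.sum ∧ n ∣ S'.sum)

/-- `S` is nonempty, `σ(S) ≥ ⌈k/n⌉·n` and `n ∣ σ(S)`, and no nonempty proper
sub-multiset has both of these properties. -/
def MinimalIdempotentSum (k n : ℕ) (S : Multiset ℕ) : Prop :=
  S ≠ 0 ∧ (nCeil k n * n ≤ S.sum ∧ n ∣ S.sum) ∧
    ∀ S' : Multiset ℕ, S' < S → S' ≠ 0 → ¬(nCeil k n * n ≤ S'.sum ∧ n ∣ S'.sum)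

/-- The set of sums of nonempty sub-multisets of `T` over `ZMod n`. -/
def subSumsZ {n : ℕ} (T : Multiset (ZMod n)) : Set (ZMod n) :=
  {x | ∃ U : Multiset (ZMod n), U ≤ T ∧ U ≠ 0 ∧ U.sum = x}

/-- `T` is (zero-sum free) `g`-smooth: `T = {n₁·g, …, n_ℓ·g}` with
`1 = n₁ ≤ ⋯ ≤ n_ℓ`, `N := n₁ + ⋯ + n_ℓ < n` and `Σ(T) = {g, 2g, …, N·g}`. -/
def GSmooth {n : ℕ} (g : ZMod n) (T : Multiset (ZMod n)) : Prop :=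
  ∃ c : Multiset ℕ, T = c.map (fun m => m • g) ∧ 1 ∈ c ∧ (∀ m ∈ c, 1 ≤ m) ∧
    c.sum < n ∧ subSumsZ T = {x | ∃ j : ℕ, 1 ≤ j ∧ j ≤ c.sum ∧ x = j • g}

/-- `T` is zero-sum `g`-smooth: `T = {n₁·g, …, n_ℓ·g}` with
`1 = n₁ ≤ ⋯ ≤ n_ℓ`, `n₁ + ⋯ + n_ℓ = n` and `Σ(T) = {g, 2g, …, n·g}`. -/
def ZeroSumGSmooth {n : ℕ} (g : ZMod n) (T : Multiset (ZMod n)) : Prop :=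
  ∃ c : Multiset ℕ, T = c.map (fun m => m • g) ∧ 1 ∈ c ∧ (∀ m ∈ c, 1 ≤ m) ∧
    c.sum = n ∧ subSumsZ T = {x | ∃ j : ℕ, 1 ≤ j ∧ j ≤ n ∧ x = j • g}

/-- For a generator `g` of `ZMod n`, the unique `t ∈ [1,n]` with `t • g = a`. -/
noncomputable def normIdx (n : ℕ) (g a : ZMod n) : ℕ :=
  if (a * Ring.inverse g).val = 0 then n else (a * Ring.inverse g).val

/-- `‖T‖_g = (n₁ + ⋯ + n_ℓ)/n` where `T = {n₁·g, …, n_ℓ·g}` with `nᵢ ∈ [1,n]`. -/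
noncomputable def normg (n : ℕ) (g : ZMod n) (T : Multiset (ZMod n)) : ℚ :=
  ((T.map (normIdx n g)).sum : ℚ) / n

/-- `ind(T) = 1`: the minimum of `‖T‖_g` over generators `g` equals `1`. -/
def HasIndexOne (n : ℕ) (T : Multiset (ZMod n)) : Prop :=
  (∃ g : ZMod n, addOrderOf g = n ∧ normg n g T = 1) ∧
  ∀ g : ZMod n, addOrderOf g = n → (1 : ℚ) ≤ normg n g T

set_option synthInstance.maxSize 1000 in
/-- A finset of `ZMod 5` without opposite elements is contained in `{g, 2g}` for one of its
elements `g`. -/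
lemma exists_generator_of_no_opposite : ∀ s : Finset (ZMod 5), s.Nonempty →
    (∀ y ∈ s, ∀ z ∈ s, y + z ≠ 0) → ∃ g ∈ s, ∀ y ∈ s, y = g ∨ y = 2 • g := by
  decide

/-- If `i ≥ 1` and `i + 2j ≤ 4`, the nonempty sub-sums of `i` copies of `g` and `j` copies of `2g`
are exactly `g, 2g, …, (i + 2j)g`. Sub-sums are listed through `Multiset.powerset` so that the
statement is decidable. -/
lemma subsums_of_small_coefficients : ∀ i ∈ Finset.Icc 1 4, ∀ j ∈ Finset.range 2, i + 2 * j < 5 →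
    ∀ g x : ZMod 5,
      x ∈ ((replicate i g + replicate j (2 • g)).powerset.filter (· ≠ 0)).map sum ↔
        ∃ k ∈ Finset.Icc 1 (i + 2 * j), x = k • g := by
  decide

theorem zero_sum_free_smooth_mod_five (T : Multiset (ZMod 5)) (hT : T ≠ 0)
    (h : ZeroSumFree T) :
    ∃ g : ZMod 5, addOrderOf g = 5 ∧ GSmooth g T := by
  have hmem0 : ∀ y ∈ T, y ≠ 0 := fun y hy => by
    simpa using h {y} (singleton_le.2 hy) (by simp)
  have hadd : ∀ y ∈ T, ∀ z ∈ T, y + z ≠ 0 := by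
    intro y hy z hz
    rcases eq_or_ne y z with rfl | hne
    · have key : ∀ a : ZMod 5, a ≠ 0 → a + a ≠ 0 := by decide
      exact key y (hmem0 y hy)
    · have hle : ({y, z} : Multiset (ZMod 5)) ≤ T :=
        (le_iff_subset (by simp [hne])).2 (by intro a; simp; rintro (rfl | rfl) <;> assumption)
      simpa using h {y, z} hle (by simp)
  obtain ⟨g, hgT, hg⟩ := exists_generator_of_no_opposite T.toFinset
    (by simpa [Finset.nonempty_iff_ne_empty] using hT) (by simpa using hadd)
  rw [mem_toFinset] at hgT
  have hg0 := hmem0 g hgT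
  have hg2 : 2 • g ≠ g := by
    have key : ∀ a : ZMod 5, a ≠ 0 → 2 • a ≠ a := by decide
    exact key g hg0
  have h5 : 5 • g = 0 := by
    have key : ∀ a : ZMod 5, 5 • a = 0 := by decide
    exact key g
  obtain ⟨i, hi⟩ : ∃ i, i = T.count g := ⟨_, rfl⟩
  obtain ⟨j, hj⟩ : ∃ j, j = T.count (2 • g) := ⟨_, rfl⟩
  have hTeq : T = replicate i g + replicate j (2 • g) := by
    ext a
    rw [count_add, count_replicate, count_replicate]
    by_cases ha : a ∈ T
    · rcases hg a (by simpa using ha) with rfl | rfl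
      · rw [if_pos rfl, if_neg hg2, add_zero, hi]
      · rw [if_neg hg2.symm, if_pos rfl, zero_add, hj]
    · have h1 : g ≠ a := by rintro rfl; exact ha hgT
      by_cases h2 : 2 • g = a
      · rw [if_neg h1, if_pos h2, zero_add, hj, h2]
      · rw [if_neg h1, if_neg h2, count_eq_zero_of_notMem ha]
  have hi1 : 1 ≤ i := hi ▸ count_pos.2 hgT
  have hsub : ∀ a b, a ≤ i → b ≤ j → a + 2 * b ≠ 5 := by
    intro a b ha hb hab
    refine h (replicate a g + replicate b (2 • g)) ?_ ?_ ?_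
    · rw [hTeq]
      exact add_le_add (replicate_mono _ ha) (replicate_mono _ hb)
    · intro h0
      have := congrArg card h0
      simp at this
      omega
    · rw [sum_add, sum_replicate, sum_replicate, smul_smul, ← add_smul, mul_comm b, hab, h5]
  -- Otherwise `(5, 0)`, `(3, 1)` or `(1, 2)` would be available as `(a, b)` in `hsub`.
  have hN : i + 2 * j < 5 := by
    have h50 := hsub 5 0
    have h31 := hsub 3 1
    have h12 := hsub 1 2
    omega
  have : Fact (Nat.Prime 5) := ⟨by norm_num⟩
  refine ⟨g, addOrderOf_eq_prime h5 hg0,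
    replicate i 1 + replicate j 2, ?_, ?_, ?_, ?_, ?_⟩
  · simpa using hTeq
  · rw [mem_add, mem_replicate]
    exact Or.inl ⟨by omega, rfl⟩
  · intro m hm
    rw [mem_add, mem_replicate, mem_replicate] at hm
    omega
  · simp
    omega
  · have hc : (replicate i 1 + replicate j 2).sum = i + 2 * j := by simp [mul_comm]
    ext x
    have := subsums_of_small_coefficients i (by simp; omega) j (by simp; omega) hN g x
    rw [← hTeq] at this
    simpa [subSumsZ, hc, and_assoc] using this
end

section
/- Let k > n ≥ 1 be integers and let ℓ ≥ 1. Suppose that every idempotent-sum free finite multiset S of integers from [1, k+n−1] with |S| ≥ ℓ is 1-smooth. Then every minimal idempotent-sum multiset L of integers from [1, k+n−1] with |L| ≥ ℓ + 1 is 1-smooth. -/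
/-!
Removing any one term `x` from a minimal idempotent-sum multiset `L` leaves an idempotent-sum free
multiset of size at least `ℓ ≥ 1`, which is 1-smooth by hypothesis. Of two terms of `L`, let `x` be
the smaller one. Then `x` is at most the other term, hence at most `σ(L \ x)`, so the intervals
`[1, σ(L \ x)]` and `[x, x + σ(L \ x)]` of attainable sums cover `[1, σ(L)]`
(`OneSmooth.cons`).
-/

open Multiset

/-- Adjoining a term that leaves no gap after `[1, σ(S)]` preserves 1-smoothness. -/
lemma OneSmooth.cons {S : Multiset ℕ} {x : ℕ} (hS : OneSmooth S) (hx : 1 ≤ x)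
    (hxS : x ≤ S.sum + 1) (hpos : ∀ y ∈ S, 1 ≤ y) : OneSmooth (x ::ₘ S) := by
  unfold OneSmooth at *
  ext t
  simp only [Set.mem_Icc, Multiset.sum_cons]
  constructor
  · rintro ⟨U, hU, hU0, rfl⟩
    refine ⟨?_, ?_⟩
    · obtain ⟨a, ha⟩ := Multiset.exists_mem_of_ne_zero hU0
      have h1 : 1 ≤ a := by
        rcases Multiset.mem_cons.1 (Multiset.mem_of_le hU ha) with rfl | h
        exacts [hx, hpos a h]
      exact h1.trans (Multiset.le_sum_of_mem ha)
    · obtain ⟨V, hV⟩ := Multiset.le_iff_exists_add.1 hU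
      have := congrArg Multiset.sum hV
      simp only [Multiset.sum_cons, Multiset.sum_add] at this
      omega
  · rintro ⟨h1, h2⟩
    by_cases ht : t ≤ S.sum
    · obtain ⟨U, hU, hU0, hUt⟩ : t ∈ subSums S := hS ▸ ⟨h1, ht⟩
      exact ⟨U, hU.trans (Multiset.le_cons_self S x), hU0, hUt⟩
    · by_cases htx : t = x
      · exact ⟨{x}, by simp, by simp, by simp [htx]⟩
      · obtain ⟨U, hU, hU0, hUt⟩ : t - x ∈ subSums S := hS ▸ ⟨by omega, by omega⟩
        exact ⟨x ::ₘ U, Multiset.cons_le_cons x hU, by simp, by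
          rw [Multiset.sum_cons, hUt]; omega⟩

theorem minimal_smooth_of_free_smooth (k n ℓ : ℕ) (hn : 1 ≤ n) (hkn : n < k)
    (hℓ : 1 ≤ ℓ)
    (H : ∀ S : Multiset ℕ, (∀ x ∈ S, 1 ≤ x ∧ x ≤ k + n - 1) →
      IdempotentSumFree k n S → ℓ ≤ Multiset.card S → OneSmooth S) :
    ∀ L : Multiset ℕ, (∀ x ∈ L, 1 ≤ x ∧ x ≤ k + n - 1) →
      MinimalIdempotentSum k n L → ℓ + 1 ≤ Multiset.card L → OneSmooth L := by
  intro L hL hmin hcard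
  -- Two terms suffice to find one that is not larger than the sum of all the others.
  obtain ⟨x, S, rfl, hxS⟩ : ∃ x S, L = x ::ₘ S ∧ x ≤ S.sum := by
    obtain ⟨a, ha⟩ := Multiset.card_pos_iff_exists_mem.1 (show 0 < Multiset.card L by omega)
    obtain ⟨T, rfl⟩ := Multiset.exists_cons_of_mem ha
    rw [Multiset.card_cons] at hcard
    obtain ⟨b, hb⟩ := Multiset.card_pos_iff_exists_mem.1 (show 0 < Multiset.card T by omega)
    obtain ⟨M, rfl⟩ := Multiset.exists_cons_of_mem hb
    rcases le_total a b with hab | hba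
    · exact ⟨a, b ::ₘ M, rfl, by rw [Multiset.sum_cons]; omega⟩
    · exact ⟨b, a ::ₘ M, Multiset.cons_swap a b M, by rw [Multiset.sum_cons]; omega⟩
  have hS : ∀ y ∈ S, 1 ≤ y ∧ y ≤ k + n - 1 := fun y hy => hL y (Multiset.mem_cons_of_mem hy)
  have hfree : IdempotentSumFree k n S := fun S' hS' h0 =>
    hmin.2.2 S' (hS'.trans_lt (Multiset.lt_cons_self S x)) h0
  rw [Multiset.card_cons] at hcard
  exact (H S hS hfree (by omega)).cons (hL x (Multiset.mem_cons_self x S)).1 (by omega)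
    fun y hy => (hS y hy).1
end

section
/- Let k > n ≥ 2 be integers with ⌈k/n⌉·n even. Then the finite multiset S consisting of one copy of 3 together with ⌈k/n⌉·n/2 − 1 copies of 2 (whose elements lie in [1, k+n−1]) is idempotent-sum free, has |S| = ⌈k/n⌉·n/2, and is not 1-smooth. -/
/-!
Write `M = ⌈k/n⌉ · n`, which is even and positive, so that `σ(S) = 3 + 2 (M / 2 - 1) = M + 1`.
Since all elements of `S` are at least `2`, no sub-multiset of `S` has sum `1`
(`sum_ne_one_of_two_le`), so `S` is not 1-smooth. Passing to complements, no sub-multiset has sum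
`M` either. A sub-multiset sum that is at least `M` is therefore `M + 1`, which is not divisible by
`n ≥ 2` because `n ∣ M`.
-/

open Multiset

lemma sum_ne_one_of_two_le (U : Multiset ℕ) (hU : ∀ x ∈ U, 2 ≤ x) : U.sum ≠ 1 := by
  induction U using Multiset.induction with
  | empty => simp
  | cons a s _ =>
    have := hU a (Multiset.mem_cons_self a s)
    rw [Multiset.sum_cons]
    omega

lemma le_nCeil_mul (k n : ℕ) (hn : 0 < n) : k ≤ nCeil k n * n := by
  have h := Nat.div_add_mod (k + n - 1) n
  have h' := Nat.mod_lt (k + n - 1) hn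
  rw [mul_comm] at h
  unfold nCeil
  omega

theorem extremal_idempotent_sum_free_even_case (k n : ℕ) (hn : 2 ≤ n) (hkn : n < k)
    (he : 2 ∣ nCeil k n * n)
    (S : Multiset ℕ) (hS : S = 3 ::ₘ Multiset.replicate (nCeil k n * n / 2 - 1) 2) :
    (∀ x ∈ S, 1 ≤ x ∧ x ≤ k + n - 1) ∧ IdempotentSumFree k n S ∧
      Multiset.card S = nCeil k n * n / 2 ∧ ¬ OneSmooth S := by
  have hM : k ≤ nCeil k n * n := le_nCeil_mul k n (by omega)
  have hdvd : n ∣ nCeil k n * n := Dvd.intro_left _ rfl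
  generalize hMdef : nCeil k n * n = M at *
  have hmem : ∀ x ∈ S, x = 3 ∨ x = 2 := by
    intro x hx
    rw [hS, Multiset.mem_cons] at hx
    exact hx.imp id Multiset.eq_of_mem_replicate
  have hsum : S.sum = M + 1 := by
    rw [hS, Multiset.sum_cons, Multiset.sum_replicate, smul_eq_mul]
    omega
  have hsub : ∀ U ≤ S, U.sum ≠ 1 := fun U hU =>
    sum_ne_one_of_two_le U fun x hx => by
      have := hmem x (Multiset.mem_of_le hU hx)
      omega
  refine ⟨?_, ?_, ?_, ?_⟩
  · intro x hx
    have := hmem x hx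
    omega
  · rintro S' hS' - ⟨hge, hd⟩
    rw [hMdef] at hge
    obtain ⟨U, rfl⟩ := Multiset.le_iff_exists_add.1 hS'
    have hU := hsub U (Multiset.le_add_left _ _)
    rw [Multiset.sum_add] at hsum
    have hS'sum : S'.sum = M + 1 := by omega
    rw [hS'sum] at hd
    have h1 : n ∣ 1 := (Nat.dvd_add_right hdvd).1 hd
    have := Nat.le_of_dvd one_pos h1
    omega
  · rw [hS, Multiset.card_cons, Multiset.card_replicate]
    omega
  · intro h
    have h1 : 1 ∈ subSums S := by
      rw [h, Set.mem_Icc]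
      omega
    obtain ⟨U, hU, -, hU1⟩ := h1
    exact hsub U hU hU1
end

section
/- Let k > n ≥ 1 be integers with either n = 1, or n ≥ 3 and ⌈k/n⌉·n odd. Then: (a) every minimal idempotent-sum multiset L of integers from [1, k+n−1] with |L| ≥ ⌊(⌈k/n⌉+1)·n/2⌋ + 1 is 1-smooth; and (b) the multiset W consisting of ⌊(⌈k/n⌉+1)·n/2⌋ copies of 2 is a minimal idempotent-sum multiset that is not 1-smooth. -/
/-!
Write `c = ⌈k/n⌉`, and say that a multiset is zero-sum when `n` divides its sum.

Part (a). Let `L` be minimal with sum `(c + d) * n`. The complement of a proper nonempty zero-sum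
sub-multiset `T` is again proper and zero-sum, so by minimality its sum is less than `c * n`, whence
`T` has sum at least `(d + 1) * n`. Any `n` integers contain a nonempty zero-sum sub-multiset
(pigeonhole on prefix sums), so `L`, having more than `⌊(c + 1) / 2⌋ * n` elements, splits into at
least `r = ⌊(c + 1) / 2⌋ + 1` nonempty zero-sum parts. Therefore `r * (d + 1) ≤ c + d`, which together
with `c + 2 ≤ 2 * r` forces `d = 0` (`sum_eq_of_minimal`). Now the sum `c * n` of `L` is smaller
than twice its cardinality, and a multiset of positive integers with this property is 1-smooth
(`oneSmooth_of_sum_lt`).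

Part (b). All sums of copies of `2` are even, so `1` is not such a sum. For odd `c * n`, the full sum
is `(c + 1) * n`, and the only multiple of `n` in `[c * n, (c + 1) * n)` is the odd number `c * n`.
-/

open Multiset

/-- The smoothness criterion: removing an element `a ≥ 2` preserves `sum < 2 * card`, and the
hypothesis also gives `a ≤ sum + 1` for the sum of what is left, so that the intervals of sums
without `a` and with `a` overlap or abut. -/
lemma exists_sum_eq_of_sum_lt (m : ℕ) : ∀ S : Multiset ℕ, Multiset.card S = m →
    (∀ x ∈ S, 1 ≤ x) → (S.sum < 2 * Multiset.card S ∨ S = 0) →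
    ∀ x ≤ S.sum, ∃ U ≤ S, U.sum = x := by
  induction m with
  | zero =>
    intro S hS _ _ x hx
    rw [Multiset.card_eq_zero] at hS
    subst hS
    exact ⟨0, le_rfl, by simpa [eq_comm] using hx⟩
  | succ m ih =>
    intro S hS hpos hlt x hx
    have hlt : S.sum < 2 * (m + 1) := by
      rcases hlt with h | rfl
      · rwa [hS] at h
      · simp at hS
    by_cases hbig : ∃ a ∈ S, 2 ≤ a
    · obtain ⟨a, ha, ha2⟩ := hbig
      obtain ⟨S', rfl⟩ := Multiset.exists_cons_of_mem ha
      rw [Multiset.card_cons] at hS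
      rw [Multiset.sum_cons] at hlt hx
      have hcard : Multiset.card S' = m := by omega
      have hpos' : ∀ y ∈ S', 1 ≤ y := fun y hy => hpos y (Multiset.mem_cons_of_mem hy)
      have hge : Multiset.card S' ≤ S'.sum := by
        simpa using Multiset.card_nsmul_le_sum (a := 1) hpos'
      have key := ih S' hcard hpos' (Or.inl (by omega))
      by_cases hxs : x ≤ S'.sum
      · obtain ⟨U, hU, hs⟩ := key x hxs
        exact ⟨U, hU.trans (Multiset.le_cons_self _ _), hs⟩
      · obtain ⟨U, hU, hs⟩ := key (x - a) (by omega)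
        refine ⟨a ::ₘ U, Multiset.cons_le_cons _ hU, ?_⟩
        rw [Multiset.sum_cons, hs]
        omega
    · have hrep : S = Multiset.replicate (m + 1) 1 := by
        refine Multiset.eq_replicate.2 ⟨hS, fun b hb => ?_⟩
        have := hpos b hb
        by_contra hne
        exact hbig ⟨b, hb, by omega⟩
      subst hrep
      rw [Multiset.sum_replicate, smul_eq_mul, mul_one] at hx
      exact ⟨Multiset.replicate x 1, (Multiset.replicate_le_replicate 1).2 hx, by simp⟩

lemma oneSmooth_of_sum_lt {S : Multiset ℕ} (hpos : ∀ x ∈ S, 1 ≤ x)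
    (hlt : S.sum < 2 * Multiset.card S) : OneSmooth S := by
  ext x
  constructor
  · rintro ⟨U, hU, hU0, rfl⟩
    obtain ⟨a, ha⟩ := Multiset.exists_mem_of_ne_zero hU0
    obtain ⟨V, rfl⟩ := Multiset.le_iff_exists_add.1 hU
    have h1 := hpos a (Multiset.mem_of_le hU ha)
    have h2 := Multiset.le_sum_of_mem ha
    rw [Multiset.sum_add]
    exact ⟨h1.trans h2, Nat.le_add_right _ _⟩
  · rintro ⟨h1, h2⟩
    obtain ⟨U, hU, rfl⟩ := exists_sum_eq_of_sum_lt _ S rfl hpos (Or.inl hlt) x h2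
    refine ⟨U, hU, ?_, rfl⟩
    rintro rfl
    simp at h1

/-- Any `n ≥ 1` integers contain a nonempty sub-multiset with sum divisible by `n`: two of the
`n + 1` prefix sums agree modulo `n`. -/
lemma exists_zero_sum {n : ℕ} (hn : 1 ≤ n) (S : Multiset ℕ) (hS : n ≤ Multiset.card S) :
    ∃ T ≤ S, T ≠ 0 ∧ Multiset.card T ≤ n ∧ n ∣ T.sum := by
  induction S using Quotient.inductionOn with
  | h l =>
  have hl : n ≤ l.length := hS
  have hmaps : Set.MapsTo (fun i => (l.take i).sum % n)
      (Finset.range (n + 1) : Set ℕ) (Finset.range n : Set ℕ) := by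
    intro i _
    simpa using Nat.mod_lt _ hn
  obtain ⟨i₀, hi₀, j₀, hj₀, hne₀, heq₀⟩ :=
    Finset.exists_ne_map_eq_of_card_lt_of_maps_to (by simp) hmaps
  obtain ⟨i, j, hij, hj, heq⟩ : ∃ i j, i < j ∧ j ≤ n ∧
      (l.take i).sum % n = (l.take j).sum % n := by
    simp only [Finset.mem_range] at hi₀ hj₀
    rcases lt_or_gt_of_ne hne₀ with h | h
    · exact ⟨i₀, j₀, h, by omega, heq₀⟩
    · exact ⟨j₀, i₀, h, by omega, heq₀.symm⟩
  have hlen : ((l.take j).drop i).length = j - i := by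
    rw [List.length_drop, List.length_take]
    omega
  refine ⟨((l.take j).drop i : List ℕ), ?_, ?_, ?_, ?_⟩
  · exact ((List.drop_sublist _ _).trans (List.take_sublist _ _)).subperm
  · rw [← Multiset.card_pos, Multiset.coe_card, hlen]
    omega
  · rw [Multiset.coe_card, hlen]
    omega
  · have hsplit : (l.take j).sum = (l.take i).sum + ((l.take j).drop i).sum := by
      have h := congrArg List.sum (List.take_append_drop i (l.take j))
      rw [List.sum_append, List.take_take, min_eq_left hij.le] at h
      exact h.symm
    rw [Multiset.sum_coe]
    rw [hsplit] at heq
    exact (Nat.modEq_zero_iff_dvd).1 (Nat.ModEq.add_left_cancel'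
      (l.take i).sum (by simpa [Nat.ModEq] using heq.symm))

/-- A zero-sum multiset with more than `r * n` elements splits into `r + 1` nonempty zero-sum parts;
here each nonempty zero-sum sub-multiset is assumed to have sum at least `B`. -/
lemma mul_le_sum_of_card {n B : ℕ} (hn : 1 ≤ n) (r : ℕ) : ∀ S : Multiset ℕ,
    (∀ T ≤ S, T ≠ 0 → n ∣ T.sum → B ≤ T.sum) → n ∣ S.sum → r * n < Multiset.card S →
    (r + 1) * B ≤ S.sum := by
  induction r with
  | zero =>
    intro S hB hdvd hcard
    rw [zero_add, one_mul]
    exact hB S le_rfl (Multiset.card_pos.1 (by omega)) hdvd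
  | succ r ih =>
    intro S hB hdvd hcard
    rw [add_mul, one_mul] at hcard
    obtain ⟨T, hT, hT0, hTn, hTd⟩ := exists_zero_sum hn S (by omega)
    obtain ⟨V, rfl⟩ := Multiset.le_iff_exists_add.1 hT
    rw [Multiset.sum_add] at hdvd ⊢
    rw [Multiset.card_add] at hcard
    have h1 := hB T hT hT0 hTd
    have h2 := ih V (fun U hU => hB U (hU.trans (Multiset.le_add_left _ _)))
      ((Nat.dvd_add_right hTd).1 hdvd) (by omega)
    rw [add_mul _ 1, one_mul]
    omega

/-- A long minimal idempotent-sum multiset has the least sum possible. -/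
lemma sum_eq_of_minimal {k n : ℕ} (hn : 1 ≤ n) (hc : 1 ≤ nCeil k n) {L : Multiset ℕ}
    (hmin : MinimalIdempotentSum k n L)
    (hcard : (nCeil k n + 1) * n / 2 + 1 ≤ Multiset.card L) : L.sum = nCeil k n * n := by
  obtain ⟨-, ⟨hge, hdvd⟩, hsub⟩ := hmin
  generalize nCeil k n = c at *
  obtain ⟨m, hm⟩ := id hdvd
  have hcm : c ≤ m := by
    rw [hm, mul_comm n] at hge
    exact Nat.le_of_mul_le_mul_right hge hn
  obtain ⟨d, rfl⟩ := Nat.exists_eq_add_of_le hcm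
  have hB : ∀ T ≤ L, T ≠ 0 → n ∣ T.sum → (d + 1) * n ≤ T.sum := by
    intro T hT hT0 hTd
    obtain ⟨V, rfl⟩ := Multiset.le_iff_exists_add.1 hT
    rw [Multiset.sum_add] at hm hdvd
    have hVd : n ∣ V.sum := (Nat.dvd_add_right hTd).1 hdvd
    have hV : V.sum < c * n := by
      by_cases hV0 : V = 0
      · subst hV0
        simpa using Nat.mul_pos hc hn
      · by_contra hcon
        refine hsub V ?_ hV0 ⟨by omega, hVd⟩
        exact lt_of_le_of_ne (Multiset.le_add_left _ _) (by simpa using hT0)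
    obtain ⟨t, ht⟩ := hTd
    have h1 : d * n < T.sum := by
      have : n * (c + d) = c * n + d * n := by ring
      omega
    rw [ht, mul_comm n] at h1 ⊢
    exact Nat.mul_le_mul_right _ (Nat.lt_of_mul_lt_mul_right h1)
  have hr : (c + 1) / 2 * n < Multiset.card L :=
    lt_of_le_of_lt (by
      rw [Nat.le_div_iff_mul_le two_pos, mul_right_comm]
      exact Nat.mul_le_mul_right _ (Nat.div_mul_le_self _ _)) hcard
  have hmul := mul_le_sum_of_card hn _ L hB hdvd hr
  rw [hm, ← mul_assoc, mul_comm n] at hmul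
  have hmul := Nat.le_of_mul_le_mul_right hmul hn
  have h2 : c + 2 ≤ 2 * ((c + 1) / 2 + 1) := by omega
  generalize (c + 1) / 2 + 1 = r at *
  have hd : d = 0 := by
    rcases Nat.eq_zero_or_pos d with h | h
    · exact h
    · nlinarith [Nat.mul_le_mul_right (d + 1) h2, Nat.mul_le_mul_left c h]
  rw [hm, hd, add_zero, mul_comm]

lemma even_sum_replicate {c n : ℕ} (hodd : Odd (c * n)) :
    (Multiset.replicate ((c + 1) * n / 2) 2).sum = (c + 1) * n := by
  rw [Multiset.sum_replicate, smul_eq_mul]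
  exact Nat.div_mul_cancel ((Nat.odd_mul.1 hodd).1.add_one.mul_right n).two_dvd

theorem smo_semigroup_odd_case (k n : ℕ) (hn : 1 ≤ n) (hkn : n < k)
    (hcase : n = 1 ∨ (3 ≤ n ∧ Odd (nCeil k n * n))) :
    (∀ L : Multiset ℕ, (∀ x ∈ L, 1 ≤ x ∧ x ≤ k + n - 1) →
      MinimalIdempotentSum k n L →
      (nCeil k n + 1) * n / 2 + 1 ≤ Multiset.card L → OneSmooth L) ∧
    (MinimalIdempotentSum k n (Multiset.replicate ((nCeil k n + 1) * n / 2) 2) ∧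
      ¬ OneSmooth (Multiset.replicate ((nCeil k n + 1) * n / 2) 2)) := by
  set c := nCeil k n with hc
  have hc2 : 2 ≤ c := by
    rw [hc, nCeil, Nat.le_div_iff_mul_le hn]
    omega
  refine ⟨fun L hL hmin hcard => oneSmooth_of_sum_lt (fun x hx => (hL x hx).1) ?_, ?_, ?_⟩
  · rw [sum_eq_of_minimal hn (by omega) hmin hcard, ← hc]
    have := Nat.div_add_mod ((c + 1) * n) 2
    have := Nat.mod_lt ((c + 1) * n) two_pos
    have : (c + 1) * n = c * n + n := by ring
    omega
  · refine ⟨?_, ?_, ?_⟩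
    · rw [← Multiset.card_pos, Multiset.card_replicate]
      have : 3 * 1 ≤ (c + 1) * n := Nat.mul_le_mul (by omega) hn
      omega
    · rw [← hc]
      rcases hcase with rfl | ⟨-, hodd⟩
      · simp
        omega
      · rw [even_sum_replicate hodd]
        exact ⟨Nat.mul_le_mul_right _ (by omega), dvd_mul_left _ _⟩
    · rintro S' hlt - ⟨h1, h2⟩
      rw [← hc] at h1
      obtain ⟨j, -, rfl⟩ := Multiset.le_replicate_iff.1 hlt.le
      have hlt' := Multiset.card_lt_card hlt
      rw [Multiset.card_replicate, Multiset.card_replicate] at hlt'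
      rw [Multiset.sum_replicate, smul_eq_mul] at h1 h2
      rcases hcase with rfl | ⟨-, hodd⟩
      · omega
      · obtain ⟨m, hm⟩ := h2
        -- The sum is a multiple of `n` in `[c * n, (c + 1) * n)`, so it is the odd number `c * n`.
        have hW := even_sum_replicate hodd
        rw [Multiset.sum_replicate, smul_eq_mul] at hW
        have hm1 : n * m < n * (c + 1) := by
          rw [← hm, mul_comm n, ← hW]
          omega
        have hm2 : n * c ≤ n * m := by
          rw [← hm, mul_comm n]
          exact h1
        have hm3 : m = c := by
          have := Nat.lt_of_mul_lt_mul_left hm1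
          have := Nat.le_of_mul_le_mul_left hm2 hn
          omega
        rw [hm3, mul_comm n] at hm
        obtain ⟨t, ht⟩ := hodd
        omega
  · intro h
    have h1 : 1 ∈ subSums (Multiset.replicate ((c + 1) * n / 2) 2) := by
      rw [h, Multiset.sum_replicate, smul_eq_mul]
      have : 3 * 1 ≤ (c + 1) * n := Nat.mul_le_mul (by omega) hn
      exact ⟨le_rfl, by omega⟩
    obtain ⟨U, hU, -, hsum⟩ := h1
    obtain ⟨j, -, rfl⟩ := Multiset.le_replicate_iff.1 hU
    rw [Multiset.sum_replicate, smul_eq_mul] at hsum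
    omega
end
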